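/- arXiv:1708.00832 — 2 statements merged into one kernel-verified Lean document; each statement's English description precedes it below -/
import Mathlib

section
/- Let T = {1342, 2314, 3412} (patterns of length 4). Then the generating function for T-avoiders satisfies, as formal power series over ℚ, (1-x)^5·(1-2x)·F_T(x) = (1-3x+3x^2)^2·C(x) - x·(1-x)·(1-3x+5x^2-4x^3), where C(x) is the Catalan number generating function. -/
open PowerSeries

/-- A permutation `π` of `{0,…,n-1}` contains the pattern `σ` (of length `k`) if there is an
order-embedding of positions on which the values of `π` appear in the same relative order as
the values of `σ`. -/
def ContainsPattern {n k : ℕ} (π : Equiv.Perm (Fin n)) (σ : Fin k → Fin k) : Prop :=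
  ∃ f : Fin k ↪o Fin n, ∀ a b : Fin k, σ a < σ b ↔ π (f a) < π (f b)

/-- The number of permutations of length `n` avoiding every pattern in `T`. -/
noncomputable def avoiderCount (T : Set (Fin 4 → Fin 4)) (n : ℕ) : ℕ :=
  Nat.card {π : Equiv.Perm (Fin n) // ∀ σ ∈ T, ¬ ContainsPattern π σ}

/-- The generating function `F_T(x) = ∑_n |S_n(T)| xⁿ` over `ℚ`. -/
noncomputable def avoiderGF (T : Set (Fin 4 → Fin 4)) : PowerSeries ℚ :=
  PowerSeries.mk fun n => (avoiderCount T n : ℚ)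

/-- The generating function of the Catalan numbers over `ℚ`. -/
noncomputable def catalanGF : PowerSeries ℚ :=
  PowerSeries.mk fun n => (catalan n : ℚ)

/-!
Avoiders are built from right to left: every avoider of length `n + 1` arises in exactly one way by
prepending a letter to an avoider of length `n` at one of its active sites. Prepending at a site
leaves every site above it active and decides, through two-letter conditions on the old word, which
of the sites below it stay active. These conditions evolve so rigidly that they are captured by
a label with at most three parameters, which gives a generating tree with an explicit succession
rule. The series counting the descendants of the labels are the unique solution of the linear system
given by this rule, and the solution has a closed form in `1 / (1 - x)`, `1 / (1 - 2 * x)` and the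
Catalan series `C`, which enters through its equation `C = 1 + x * C ^ 2` when the powers of `C` are
summed over the children of a label.
-/

section Words

/-- The word `p` avoids the patterns 1342, 2314 and 3412, written out as forbidden inequalities
between the letters at four increasing positions. -/
def Avoids {n : ℕ} (p : Fin n → ℕ) : Prop :=
  ∀ i j k l : Fin n, i < j → j < k → k < l →
    ¬ (p i < p l ∧ p l < p j ∧ p j < p k) ∧ ¬ (p k < p i ∧ p i < p j ∧ p j < p l) ∧
      ¬ (p k < p l ∧ p l < p i ∧ p i < p j)

/-- The value that a letter `x` takes when a new letter `v` is put in front of a word: letters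
that are at least `v` make room by moving up by one. -/
def bump (v x : ℕ) : ℕ := if x < v then x else x + 1

/-- The word obtained by putting the letter `v` in front of `p` and standardizing. -/
def prepend {n : ℕ} (v : ℕ) (p : Fin n → ℕ) : Fin (n + 1) → ℕ := Fin.cons v fun i => bump v (p i)

/-- `v` is an active site of `p`: prepending the letter `v` creates no forbidden pattern that uses
the new letter. Sites are numbered `0, …, n`, site `v` being just below the value `v`. -/
def IsActive {n : ℕ} (p : Fin n → ℕ) (v : ℕ) : Prop :=
  ∀ i j k : Fin n, i < j → j < k →
    ¬ (v ≤ p k ∧ p k < p i ∧ p i < p j) ∧ ¬ (p j < v ∧ v ≤ p i ∧ p i < p k) ∧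
      ¬ (p j < p k ∧ p k < v ∧ v ≤ p i)

/-- For sites `w ≤ v`: prepending `v` and then `w` creates no forbidden pattern that uses both new
letters, so an active site `w` is still active after `v` has been prepended. -/
def Retains {n : ℕ} (p : Fin n → ℕ) (v w : ℕ) : Prop :=
  ∀ j k : Fin n, j < k →
    ¬ (w ≤ p k ∧ p k < v ∧ v ≤ p j) ∧ ¬ (p j < w ∧ v ≤ p k) ∧ ¬ (p j < p k ∧ p k < w)

theorem forall_fin_succ_lt₂ {n : ℕ} {P : Fin (n + 1) → Fin (n + 1) → Prop} :
    (∀ i j, i < j → P i j) ↔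
      (∀ j : Fin n, P 0 j.succ) ∧ ∀ i j : Fin n, i < j → P i.succ j.succ := by
  simp [Fin.forall_fin_succ (n := n)]

theorem forall_fin_succ_lt₃ {n : ℕ} {P : Fin (n + 1) → Fin (n + 1) → Fin (n + 1) → Prop} :
    (∀ i j k, i < j → j < k → P i j k) ↔ (∀ j k : Fin n, j < k → P 0 j.succ k.succ) ∧
      ∀ i j k : Fin n, i < j → j < k → P i.succ j.succ k.succ := by
  simp [Fin.forall_fin_succ (n := n)]

theorem forall_fin_succ_lt₄ {n : ℕ}
    {P : Fin (n + 1) → Fin (n + 1) → Fin (n + 1) → Fin (n + 1) → Prop} :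
    (∀ i j k l, i < j → j < k → k < l → P i j k l) ↔
      (∀ j k l : Fin n, j < k → k < l → P 0 j.succ k.succ l.succ) ∧
        ∀ i j k l : Fin n, i < j → j < k → k < l → P i.succ j.succ k.succ l.succ := by
  simp [Fin.forall_fin_succ (n := n)]

variable {n : ℕ} {p : Fin n → ℕ} {u v w x y : ℕ}

theorem prepend_zero : prepend v p 0 = v := rfl

theorem prepend_succ (i : Fin n) : prepend v p i.succ = bump v (p i) := rfl

theorem bump_lt_bump : bump v x < bump v y ↔ x < y := by grind [bump]

theorem le_bump_iff (h : w ≤ v) : w ≤ bump v x ↔ w ≤ x := by grind [bump]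

theorem bump_lt_iff (h : w ≤ v) : bump v x < w ↔ x < w := by grind [bump]

theorem succ_le_bump_iff (h : v ≤ w) : w + 1 ≤ bump v x ↔ w ≤ x := by grind [bump]

theorem bump_lt_succ_iff (h : v ≤ w) : bump v x < w + 1 ↔ x < w := by grind [bump]

theorem lt_bump_iff : v < bump v x ↔ v ≤ x := succ_le_bump_iff le_rfl

theorem avoids_prepend_iff : Avoids (prepend v p) ↔ Avoids p ∧ IsActive p v := by
  simp only [Avoids, IsActive, forall_fin_succ_lt₄, prepend_zero, prepend_succ, bump_lt_bump,
    lt_bump_iff, bump_lt_iff le_rfl]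
  grind

theorem isActive_prepend_succ_iff (h : v ≤ w) :
    IsActive (prepend v p) (w + 1) ↔ IsActive p w := by
  simp only [IsActive, forall_fin_succ_lt₃, prepend_zero, prepend_succ, bump_lt_bump,
    lt_bump_iff, bump_lt_iff le_rfl, bump_lt_succ_iff h, succ_le_bump_iff h]
  grind

theorem isActive_prepend_iff (h : w ≤ v) :
    IsActive (prepend v p) w ↔ IsActive p w ∧ Retains p v w := by
  simp only [IsActive, Retains, forall_fin_succ_lt₃, prepend_zero, prepend_succ, bump_lt_bump,
    lt_bump_iff, bump_lt_iff le_rfl, bump_lt_iff h, le_bump_iff h]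
  grind

theorem retains_prepend_succ_iff (hw : w ≤ v) (hu : v ≤ u) :
    Retains (prepend v p) (u + 1) w ↔ Retains p u w := by
  simp only [Retains, forall_fin_succ_lt₂, prepend_zero, prepend_succ, bump_lt_bump,
    lt_bump_iff, bump_lt_iff hw, le_bump_iff hw, bump_lt_succ_iff hu, succ_le_bump_iff hu]
  grind

-- When `v`, `u + 1`, `w + 1` are prepended in this order, they form 3412 with the old letter `v`
-- if `v < w`, and 2314 with the old letter `u` if `u < n`.
theorem retains_prepend_succ_succ_iff (hp : Set.range p = Set.Iio n) (hw : v ≤ w) (hwu : w ≤ u)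
    (hu : u ≤ n) :
    Retains (prepend v p) (u + 1) (w + 1) ↔ u = n ∧ w = v ∧ Retains p u w := by
  have lt_n (i) : p i < n := hp.subset (Set.mem_range_self i)
  have exists_letter {x} (hx : x < n) : ∃ i, p i = x := hp.superset hx
  simp only [Retains, forall_fin_succ_lt₂, prepend_zero, prepend_succ, bump_lt_bump, lt_bump_iff,
    bump_lt_succ_iff hw, succ_le_bump_iff hw, bump_lt_succ_iff (hw.trans hwu),
    succ_le_bump_iff (hw.trans hwu)]
  constructor
  · rintro ⟨head, tail⟩
    have u_eq : u = n := by
      by_contra hne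
      obtain ⟨i, hi⟩ := exists_letter (by omega : u < n)
      grind
    have w_eq : w = v := by
      by_contra hne
      obtain ⟨i, hi⟩ := exists_letter (by omega : v < n)
      grind
    exact ⟨u_eq, w_eq, tail⟩
  · rintro ⟨rfl, rfl, tail⟩
    grind

-- When `v`, `u`, `w` are prepended in this order with `w < u`, they form 1342 with the old
-- letter `w`.
theorem retains_prepend_iff (hp : Set.range p = Set.Iio n) (hwu : w ≤ u) (hu : u ≤ v)
    (hv : v ≤ n) :
    Retains (prepend v p) u w ↔ w = u ∧ Retains p u w := by
  simp only [Retains, forall_fin_succ_lt₂, prepend_zero, prepend_succ, bump_lt_bump, lt_bump_iff,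
    bump_lt_iff (hwu.trans hu), le_bump_iff (hwu.trans hu), bump_lt_iff hu, le_bump_iff hu]
  constructor
  · rintro ⟨head, tail⟩
    have w_eq : w = u := by
      by_contra hne
      obtain ⟨i, hi⟩ : ∃ i, p i = w := hp.superset (by simp only [Set.mem_Iio]; omega)
      grind
    exact ⟨w_eq, tail⟩
  · rintro ⟨rfl, tail⟩
    grind

end Words

section Sites

variable {n : ℕ} {p : Fin n → ℕ} {a : ℕ → ℕ} {M i q r s t : ℕ}

/-- `a 0 < a 1 < ⋯ < a M` are exactly the active sites of `p`, and the top site `n` is one of them.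
Values of `a` beyond `M` are junk. -/
structure EnumeratesSites (p : Fin n → ℕ) (M : ℕ) (a : ℕ → ℕ) : Prop where
  strictMonoOn : StrictMonoOn a (Set.Iic M)
  apply_top : a M = n
  isActive_iff : ∀ w ≤ n, IsActive p w ↔ ∃ i ≤ M, a i = w

/-- The active sites after prepending `a i` when this retains exactly the `r` sites
`a q, …, a (q + r - 1)` among `a 0, …, a i`: these come first, followed by the sites
`a i, …, a M` moved up by one. -/
def stepSites (a : ℕ → ℕ) (i q r : ℕ) (t : ℕ) : ℕ :=
  if t < r then a (q + t) else a (i + (t - r)) + 1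

theorem stepSites_of_lt (h : t < r) : stepSites a i q r t = a (q + t) := if_pos h

theorem stepSites_of_le (h : r ≤ t) : stepSites a i q r t = a (i + (t - r)) + 1 :=
  if_neg h.not_gt

namespace EnumeratesSites

variable (h : EnumeratesSites p M a)

include h

theorem apply_le_apply_iff {j k : ℕ} (hj : j ≤ M) (hk : k ≤ M) : a j ≤ a k ↔ j ≤ k :=
  h.strictMonoOn.le_iff_le hj hk

theorem apply_eq_apply_iff {j k : ℕ} (hj : j ≤ M) (hk : k ≤ M) : a j = a k ↔ j = k :=
  h.strictMonoOn.eq_iff_eq hj hk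

theorem apply_le {j : ℕ} (hj : j ≤ M) : a j ≤ n :=
  h.apply_top ▸ (h.apply_le_apply_iff hj le_rfl).2 hj

theorem strictMonoOn_stepSites (hi : i ≤ M) (hqr : q + r ≤ i + 1) :
    StrictMonoOn (stepSites a i q r) (Set.Iic (r + (M - i))) := by
  intro s hs t ht hst
  simp only [Set.mem_Iic] at hs ht
  rcases lt_or_ge t r with htr | htr
  · rw [stepSites_of_lt (hst.trans htr), stepSites_of_lt htr]
    exact h.strictMonoOn (by simp only [Set.mem_Iic]; omega) (by simp only [Set.mem_Iic]; omega)
      (by omega)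
  rw [stepSites_of_le htr]
  rcases lt_or_ge s r with hsr | hsr
  · rw [stepSites_of_lt hsr, Nat.lt_succ_iff, h.apply_le_apply_iff (by omega) (by omega)]
    omega
  · rw [stepSites_of_le hsr, Nat.add_lt_add_iff_right]
    exact h.strictMonoOn (by simp only [Set.mem_Iic]; omega) (by simp only [Set.mem_Iic]; omega)
      (by omega)

theorem isActive_prepend_iff_exists_stepSites (hi : i ≤ M) (hqr : q + r ≤ i + 1)
    (hret : ∀ j ≤ i, Retains p (a i) (a j) ↔ q ≤ j ∧ j < q + r) {w : ℕ} (hw : w ≤ n + 1) :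
    IsActive (prepend (a i) p) w ↔ ∃ t ≤ r + (M - i), stepSites a i q r t = w := by
  have hin := h.apply_le hi
  rcases le_or_gt w (a i) with hwi | hwi
  · rw [isActive_prepend_iff hwi, h.isActive_iff w (hwi.trans hin)]
    constructor
    · rintro ⟨⟨j, hj, rfl⟩, hj_ret⟩
      have hj_bounds := (hret j ((h.apply_le_apply_iff hj hi).1 hwi)).1 hj_ret
      exact ⟨j - q, by omega, by rw [stepSites_of_lt (by omega), Nat.add_sub_cancel' hj_bounds.1]⟩
    · rintro ⟨t, ht, rfl⟩
      have htr : t < r := by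
        by_contra htr
        rw [stepSites_of_le (by omega), Nat.succ_le_iff, ← not_le,
          h.apply_le_apply_iff hi (by omega)] at hwi
        omega
      rw [stepSites_of_lt htr]
      exact ⟨⟨q + t, by omega, rfl⟩, (hret _ (by omega)).2 ⟨by omega, by omega⟩⟩
  · obtain ⟨w, rfl⟩ := Nat.exists_eq_add_one_of_ne_zero (Nat.ne_zero_of_lt hwi)
    rw [isActive_prepend_succ_iff (Nat.lt_succ_iff.1 hwi), h.isActive_iff w (by omega)]
    constructor
    · rintro ⟨j, hj, rfl⟩
      have hij := (h.apply_le_apply_iff hi hj).1 (Nat.lt_succ_iff.1 hwi)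
      refine ⟨r + (j - i), by omega, ?_⟩
      rw [stepSites_of_le (by omega), Nat.add_sub_cancel_left, Nat.add_sub_cancel' hij]
    · rintro ⟨t, ht, hwt⟩
      have htr : r ≤ t := by
        by_contra htr
        rw [← hwt, stepSites_of_lt (by omega), ← not_le,
          h.apply_le_apply_iff (by omega) hi] at hwi
        omega
      rw [stepSites_of_le htr, Nat.add_right_cancel_iff] at hwt
      exact ⟨i + (t - r), by omega, hwt⟩

theorem prepend (hi : i ≤ M) (hqr : q + r ≤ i + 1)
    (hret : ∀ j ≤ i, Retains p (a i) (a j) ↔ q ≤ j ∧ j < q + r) :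
    EnumeratesSites (prepend (a i) p) (r + (M - i)) (stepSites a i q r) where
  strictMonoOn := h.strictMonoOn_stepSites hi hqr
  apply_top := by
    rw [stepSites_of_le (by omega), Nat.add_sub_cancel_left, Nat.add_sub_cancel' hi, h.apply_top]
  isActive_iff _ hw := h.isActive_prepend_iff_exists_stepSites hi hqr hret hw

theorem retains_stepSites_iff (hp : Set.range p = Set.Iio n) (hi : i ≤ M) (hqr : q + r ≤ i + 1)
    (hst : s ≤ t) (ht : t ≤ r + (M - i)) :
    Retains (_root_.prepend (a i) p) (stepSites a i q r t) (stepSites a i q r s) ↔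
      if t < r then s = t ∧ Retains p (a (q + t)) (a (q + s))
      else if s < r then Retains p (a (i + (t - r))) (a (q + s))
      else t = r + (M - i) ∧ s = r ∧ Retains p (a M) (a i) := by
  have hle {j k : ℕ} (hjk : j ≤ k) (hk : k ≤ M) : a j ≤ a k :=
    (h.apply_le_apply_iff (hjk.trans hk) hk).2 hjk
  split_ifs with htr hsr
  · rw [stepSites_of_lt htr, stepSites_of_lt (by omega),
      retains_prepend_iff hp (hle (by omega) (by omega)) (hle (by omega) hi) (h.apply_le hi),
      h.apply_eq_apply_iff (by omega) (by omega), Nat.add_left_cancel_iff]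
  · rw [stepSites_of_le (by omega), stepSites_of_lt hsr,
      retains_prepend_succ_iff (hle (by omega) hi) (hle (by omega) (by omega))]
  · have top_iff : a (i + (t - r)) = n ↔ t = r + (M - i) := by
      conv_lhs => rw [← h.apply_top, h.apply_eq_apply_iff (by omega) le_rfl]
      omega
    have bot_iff : a (i + (s - r)) = a i ↔ s = r := by
      rw [h.apply_eq_apply_iff (by omega) hi]
      omega
    rw [stepSites_of_le (by omega), stepSites_of_le (by omega),
      retains_prepend_succ_succ_iff hp (hle (by omega) (by omega)) (hle (by omega) (by omega))
        (h.apply_le (by omega)), top_iff, bot_iff]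
    refine and_congr_right fun ht_top => and_congr_right fun hs_eq => ?_
    rw [ht_top, hs_eq, Nat.add_sub_cancel_left, Nat.sub_self, Nat.add_sub_cancel' hi,
      Nat.add_zero]

end EnumeratesSites

end Sites

section Labels

/-- The labels of the generating tree of the avoiders. The label of an avoider records its number
of active sites and which active sites are retained when another one is used:
* `decreasing m` is the label of the decreasing permutation of length `m`;
* `mixed c f d` has `c + f + 1` active sites; using one of the lowest `c` of them retains the
  lowest site, using one of the next `f` retains no site below or equal to it, and using the top
  site retains the lowest `d`. -/
inductive SiteLabel where
  | decreasing (m : ℕ)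
  | mixed (c f d : ℕ)

namespace SiteLabel

/-- The index of the top active site, i.e. the number of active sites minus one. -/
def top : SiteLabel → ℕ
  | decreasing m => m
  | mixed c f _ => c + f

/-- Using the active site of index `i` retains the one of index `j`, where `j ≤ i ≤ L.top`. -/
def Keeps : SiteLabel → ℕ → ℕ → Prop
  | decreasing m, i, j => i = j ∨ i = m
  | mixed c f d, i, j => i < c + f ∧ j = 0 ∧ i < c ∨ i = c + f ∧ j < d

/-- The succession rule: the label after using the active site of index `i ≤ L.top`. -/
def child : SiteLabel → ℕ → SiteLabel
  | decreasing m, i => if i < m then mixed 2 (m - i - 1) 2 else decreasing (m + 1)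
  | mixed c f d, i =>
    if i < c then mixed (c + 1 - i) f (1 + if i < d then 1 else 0)
    else if i < c + f then mixed 0 (c + f - i) (if i < d then 1 else 0)
    else mixed (min c 1) (d - min c 1) d

/-- The labels that can occur in the generating tree rooted at `decreasing 0`. -/
def IsReachable : SiteLabel → Prop
  | decreasing _ => True
  | mixed c f d => c = 0 ∧ d = 0 ∨ c = 0 ∧ f = 1 ∧ d = 1 ∨ c = 1 ∧ f = 0 ∧ d = 1 ∨
      c = 1 ∧ f = 1 ∧ d = 2 ∨ 2 ≤ c ∧ (d = 1 ∨ d = 2)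

/-- The label `L'` describes a word obtained from one with label `L` by prepending its active site
of index `i`. Here `q`, `r` are as in `stepSites`, and the last clause transcribes
`EnumeratesSites.retains_stepSites_iff`. -/
def IsStep (L : SiteLabel) (i : ℕ) (L' : SiteLabel) : Prop :=
  ∃ q r, q + r ≤ i + 1 ∧ (∀ j ≤ i, L.Keeps i j ↔ q ≤ j ∧ j < q + r) ∧ L'.top = r + (L.top - i) ∧
    ∀ s t, s ≤ t → t ≤ L'.top → (L'.Keeps t s ↔
      if t < r then s = t ∧ L.Keeps (q + t) (q + s)
      else if s < r then L.Keeps (i + (t - r)) (q + s)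
      else t = L'.top ∧ s = r ∧ L.Keeps L.top i)

/-- The number of nodes at depth `k` below a node with label `L` in the generating tree. -/
def levelCount : ℕ → SiteLabel → ℕ
  | 0, _ => 1
  | k + 1, L => ∑ i ∈ Finset.range (L.top + 1), levelCount k (L.child i)

variable {L L' : SiteLabel} {i : ℕ}

theorem IsReachable.child (hL : L.IsReachable) (hi : i ≤ L.top) : (L.child i).IsReachable := by
  cases L with
  | decreasing m => grind [SiteLabel.child, IsReachable]
  | mixed c f d => grind [SiteLabel.child, IsReachable, top]

theorem isStep_child_decreasing {m : ℕ} (hi : i ≤ m) :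
    (decreasing m).IsStep i ((decreasing m).child i) := by
  rcases hi.lt_or_eq with him | rfl
  · refine ⟨i, 1, ?_⟩
    grind [SiteLabel.child, Keeps, top]
  · refine ⟨0, i + 1, ?_⟩
    grind [SiteLabel.child, Keeps, top]

theorem isStep_child_mixed {c f d : ℕ} (hL : (mixed c f d).IsReachable) (hi : i ≤ c + f) :
    (mixed c f d).IsStep i ((mixed c f d).child i) := by
  have hd : d ≤ c + f ∧ (1 ≤ c → 1 ≤ d) := by
    simp only [IsReachable] at hL
    omega
  clear hL
  by_cases hic : i < c
  · refine ⟨0, 1, ?_⟩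
    grind [SiteLabel.child, Keeps, top]
  by_cases hif : i < c + f
  · refine ⟨0, 0, ?_⟩
    grind [SiteLabel.child, Keeps, top]
  · refine ⟨0, d, ?_⟩
    grind [SiteLabel.child, Keeps, top]

theorem IsReachable.isStep_child (hL : L.IsReachable) (hi : i ≤ L.top) :
    L.IsStep i (L.child i) := by
  cases L with
  | decreasing m => exact isStep_child_decreasing hi
  | mixed c f d => exact isStep_child_mixed hL hi

end SiteLabel

/-- `L` is the label of `p`, the active sites of `p` being `a 0 < ⋯ < a L.top`. -/
structure HasLabel {n : ℕ} (p : Fin n → ℕ) (L : SiteLabel) (a : ℕ → ℕ) : Prop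
    extends EnumeratesSites p L.top a where
  retains_iff : ∀ i j, j ≤ i → i ≤ L.top → (Retains p (a i) (a j) ↔ L.Keeps i j)

theorem HasLabel.exists_prepend {n : ℕ} {p : Fin n → ℕ} {L L' : SiteLabel} {a : ℕ → ℕ} {i : ℕ}
    (h : HasLabel p L a) (hp : Set.range p = Set.Iio n) (hi : i ≤ L.top) (hstep : L.IsStep i L') :
    ∃ b, HasLabel (prepend (a i) p) L' b := by
  obtain ⟨q, r, hqr, hkeeps, htop, hkeeps'⟩ := hstep
  have hsites := h.toEnumeratesSites.prepend hi hqr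
    fun j hj => (h.retains_iff i j hj hi).trans (hkeeps j hj)
  refine ⟨stepSites a i q r, htop ▸ hsites, fun t s hst ht => ?_⟩
  rw [h.retains_stepSites_iff hp hi hqr hst (htop ▸ ht), hkeeps' s t hst ht, htop]
  split_ifs with htr hsr
  · rw [h.retains_iff _ _ (by omega) (by omega)]
  · rw [h.retains_iff _ _ (by omega) (by omega)]
  · rw [h.retains_iff _ _ hi le_rfl]

theorem hasLabel_of_length_zero (p : Fin 0 → ℕ) : HasLabel p (.decreasing 0) id where
  strictMonoOn := strictMono_id.strictMonoOn _
  apply_top := rfl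
  isActive_iff w hw := iff_of_true (fun i => i.elim0) ⟨w, hw, rfl⟩
  retains_iff _ _ _ hi := iff_of_true (fun i => i.elim0) (.inr (Nat.le_zero.1 hi))

end Labels

section Permutations

open Finset

variable {n : ℕ}

/-- The one-line notation of `π` as a word of natural numbers. -/
def values (π : Equiv.Perm (Fin n)) (i : Fin n) : ℕ := π i

theorem range_values (π : Equiv.Perm (Fin n)) : Set.range (values π) = Set.Iio n := by
  rw [show values π = Fin.val ∘ π from rfl, π.surjective.range_comp, Fin.range_val]

/-- The permutation obtained by putting the letter `v` in front of `π`. -/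
def prependPerm (v : Fin (n + 1)) (π : Equiv.Perm (Fin n)) : Equiv.Perm (Fin (n + 1)) :=
  (finSuccEquiv n).trans (π.optionCongr.trans (finSuccEquiv' v).symm)

theorem prependPerm_zero (v : Fin (n + 1)) (π : Equiv.Perm (Fin n)) : prependPerm v π 0 = v := by
  simp [prependPerm]

theorem prependPerm_succ (v : Fin (n + 1)) (π : Equiv.Perm (Fin n)) (i : Fin n) :
    prependPerm v π i.succ = v.succAbove (π i) := by
  simp [prependPerm]

theorem values_prependPerm (v : Fin (n + 1)) (π : Equiv.Perm (Fin n)) :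
    values (prependPerm v π) = prepend v (values π) := by
  refine funext (Fin.cases ?_ fun i => ?_)
  · rw [values, prependPerm_zero, prepend_zero]
  · rw [values, prependPerm_succ, prepend_succ, bump, values, Fin.succAbove]
    simp only [Fin.lt_def, Fin.val_castSucc]
    split_ifs <;> rfl

theorem prependPerm_bijective :
    Function.Bijective fun x : Fin (n + 1) × Equiv.Perm (Fin n) => prependPerm x.1 x.2 := by
  refine (Fintype.bijective_iff_injective_and_card _).2 ⟨?_, ?_⟩
  · rintro ⟨v, π⟩ ⟨w, ρ⟩ h
    obtain rfl : v = w := by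
      simpa only [prependPerm_zero] using Equiv.congr_fun h 0
    have hπ : π = ρ := Equiv.ext fun i => Fin.succAbove_right_injective (p := v) <| by
      simpa only [prependPerm_succ] using Equiv.congr_fun h i.succ
    rw [hπ]
  · rw [Fintype.card_prod, Fintype.card_perm, Fintype.card_perm, Fintype.card_fin,
      Fintype.card_fin, Nat.factorial_succ]

open Classical in
/-- The number of ways of prepending `k` letters to `π` one at a time, each at an active site. -/
noncomputable def extensionCount : ℕ → {n : ℕ} → Equiv.Perm (Fin n) → ℕ
  | 0, _, _ => 1
  | k + 1, n, π =>
    ∑ v ∈ {v : Fin (n + 1) | IsActive (values π) v}, extensionCount k (prependPerm v π)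

open Classical in
theorem sum_avoids_eq_sum_isActive (g : Equiv.Perm (Fin (n + 1)) → ℕ) :
    ∑ ρ with Avoids (values ρ), g ρ =
      ∑ π : Equiv.Perm (Fin n) with Avoids (values π),
        ∑ v ∈ {v : Fin (n + 1) | IsActive (values π) v}, g (prependPerm v π) := by
  simp only [sum_filter]
  rw [← prependPerm_bijective.sum_comp, Fintype.sum_prod_type_right]
  refine sum_congr rfl fun π _ => ?_
  simp only [values_prependPerm, avoids_prepend_iff, ite_and, sum_ite_irrel, sum_const_zero]

open Classical in
theorem sum_extensionCount (k n : ℕ) :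
    ∑ π : Equiv.Perm (Fin n) with Avoids (values π), extensionCount k π =
      #{π : Equiv.Perm (Fin (n + k)) | Avoids (values π)} := by
  induction k generalizing n with
  | zero => simp only [extensionCount, card_eq_sum_ones, Nat.add_zero]
  | succ k ih =>
    simp only [extensionCount]
    rw [← sum_avoids_eq_sum_isActive, ih, Nat.add_right_comm, Nat.add_assoc]

theorem HasLabel.extensionCount_eq {π : Equiv.Perm (Fin n)} {L : SiteLabel} {a : ℕ → ℕ}
    (h : HasLabel (values π) L a) (hL : L.IsReachable) (k : ℕ) :
    extensionCount k π = L.levelCount k := by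
  classical
  induction k generalizing n L a with
  | zero => rfl
  | succ k ih =>
    rw [extensionCount, SiteLabel.levelCount]
    have le_top {i : ℕ} (hi : i ∈ range (L.top + 1)) : i ≤ L.top := mem_range_succ_iff.1 hi
    have site_lt {i : ℕ} (hi : i ∈ range (L.top + 1)) : a i < n + 1 :=
      Nat.lt_succ_of_le (h.apply_le (le_top hi))
    refine (sum_bij (fun i hi => (⟨a i, site_lt hi⟩ : Fin (n + 1))) ?_ ?_ ?_ ?_).symm
    · intro i hi
      exact (mem_filter_univ _).2 <|
        (h.isActive_iff _ (h.apply_le (le_top hi))).2 ⟨i, le_top hi, rfl⟩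
    · intro i hi j hj hij
      exact (h.apply_eq_apply_iff (le_top hi) (le_top hj)).1 (Fin.mk.inj hij)
    · intro v hv
      obtain ⟨i, hi, hiv⟩ := (h.isActive_iff v v.is_le).1 ((mem_filter_univ v).1 hv)
      exact ⟨i, mem_range_succ_iff.2 hi, Fin.ext hiv⟩
    · intro i hi
      obtain ⟨b, hb⟩ :=
        h.exists_prepend (range_values π) (le_top hi) (hL.isStep_child (le_top hi))
      rw [← values_prependPerm ⟨a i, site_lt hi⟩] at hb
      exact (ih hb (hL.child (le_top hi))).symm

theorem containsPattern_iff_exists (π : Equiv.Perm (Fin n)) (σ : Fin 4 → Fin 4) :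
    ContainsPattern π σ ↔ ∃ i j k l : Fin n, i < j ∧ j < k ∧ k < l ∧
      ∀ a b : Fin 4, σ a < σ b ↔ π (![i, j, k, l] a) < π (![i, j, k, l] b) := by
  constructor
  · rintro ⟨f, hf⟩
    have eq_f : ![f 0, f 1, f 2, f 3] = f := by
      ext a
      fin_cases a <;> rfl
    exact ⟨f 0, f 1, f 2, f 3, f.strictMono (by decide), f.strictMono (by decide),
      f.strictMono (by decide), eq_f.symm ▸ hf⟩
  · rintro ⟨i, j, k, l, hij, hjk, hkl, h⟩
    refine ⟨OrderEmbedding.ofStrictMono ![i, j, k, l] ?_, h⟩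
    rw [Fin.strictMono_iff_lt_succ]
    intro a
    fin_cases a
    exacts [hij, hjk, hkl]

theorem forall_not_containsPattern_iff_avoids (π : Equiv.Perm (Fin n)) :
    (∀ σ ∈ ({![0, 2, 3, 1], ![1, 2, 0, 3], ![2, 3, 0, 1]} : Set (Fin 4 → Fin 4)),
      ¬ ContainsPattern π σ) ↔ Avoids (values π) := by
  simp only [Set.mem_insert_iff, Set.mem_singleton_iff, forall_eq_or_imp, forall_eq,
    containsPattern_iff_exists, Avoids]
  simp only [Fin.forall_fin_succ (n := 3), Fin.forall_fin_succ (n := 2),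
    Fin.forall_fin_succ (n := 1), Fin.forall_fin_succ (n := 0)]
  simp only [Nat.succ_eq_add_one, Nat.reduceAdd, Fin.isValue, Matrix.cons_val_zero,
    lt_self_iff_false, Fin.succ_zero_eq_one, Matrix.cons_val_one, Fin.reduceLT, true_iff,
    Fin.succ_one_eq_two, Matrix.cons_val, Fin.reduceSucc, zero_lt_one, Matrix.cons_val_succ,
    Matrix.cons_val_fin_one, IsEmpty.forall_iff, and_true, true_and, not_lt_zero, false_iff,
    not_lt, not_exists, not_and, values, Fin.val_fin_lt]
  grind

theorem avoiderCount_eq_levelCount (n : ℕ) :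
    avoiderCount ({![0, 2, 3, 1], ![1, 2, 0, 3], ![2, 3, 0, 1]} : Set (Fin 4 → Fin 4)) n =
      (SiteLabel.decreasing 0).levelCount n := by
  classical
  have avoids_of_length_zero (π : Equiv.Perm (Fin 0)) : Avoids (values π) := fun i => i.elim0
  have h := sum_extensionCount n 0
  rw [filter_true_of_mem fun π _ => avoids_of_length_zero π, Fintype.sum_unique,
    (hasLabel_of_length_zero _).extensionCount_eq trivial, Nat.zero_add] at h
  rw [h, avoiderCount, Nat.subtype_card]
  intro π
  rw [mem_filter_univ, forall_not_containsPattern_iff_avoids]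

end Permutations

section GeneratingFunctions

open Finset

namespace SiteLabel

theorem coeff_eq_levelCount {R : Type*} [CommSemiring R] {H : SiteLabel → PowerSeries R}
    (hH : ∀ L : SiteLabel, L.IsReachable →
      H L = 1 + X * ∑ i ∈ range (L.top + 1), H (L.child i))
    {L : SiteLabel} (hL : L.IsReachable) (k : ℕ) : coeff k (H L) = (L.levelCount k : R) := by
  induction k generalizing L with
  | zero =>
    rw [hH L hL, map_add, coeff_zero_X_mul, coeff_zero_one, levelCount, Nat.cast_one, add_zero]
  | succ k ih =>
    rw [hH L hL, map_add, coeff_succ_X_mul, coeff_one, if_neg k.succ_ne_zero, zero_add, map_sum,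
      levelCount, Nat.cast_sum]
    exact sum_congr rfl fun i hi => ih (hL.child (mem_range_succ_iff.1 hi))

theorem sum_child_decreasing {A : Type*} [AddCommMonoid A] (g : SiteLabel → A) (m : ℕ) :
    ∑ i ∈ range (m + 1), g ((decreasing m).child i) =
      ∑ i ∈ range m, g (mixed 2 i 2) + g (decreasing (m + 1)) := by
  rw [sum_range_succ, ← sum_range_reflect]
  congr 1
  · refine sum_congr rfl fun i hi => ?_
    rw [mem_range] at hi
    rw [child, if_pos (by omega), show m - (m - 1 - i) - 1 = i by omega]
  · rw [child, if_neg (lt_irrefl m)]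

theorem sum_child_mixed {A : Type*} [AddCommMonoid A] (g : SiteLabel → A) (c f d : ℕ) :
    ∑ i ∈ range (c + f + 1), g ((mixed c f d).child i) =
      ∑ i ∈ range c, g (mixed (c + 1 - i) f (1 + if i < d then 1 else 0)) +
        ∑ i ∈ range f, g (mixed 0 (f - i) (if c + i < d then 1 else 0)) +
          g (mixed (min c 1) (d - min c 1) d) := by
  rw [sum_range_succ, sum_range_add]
  congr 2
  · refine sum_congr rfl fun i hi => ?_
    rw [child, if_pos (mem_range.1 hi)]
  · refine sum_congr rfl fun i hi => ?_
    rw [mem_range] at hi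
    rw [child, if_neg (by omega), if_pos (by omega), Nat.add_sub_add_left]
  · rw [child, if_neg (by omega), if_neg (lt_irrefl _)]

section ClosedForm

variable {R : Type*} [CommRing R] (x C u t : R)

/-- The generating function of `mixed 1 1 2` minus that of `mixed 1 0 1`. -/
def mixedOneGap : R := x * u * ((u ^ 2 - u) * C ^ 2 + t)

/-- The generating function of `mixed c f 2` minus that of `mixed c f 1`, where `2 ≤ c`. -/
def mixedGap : R := x * u * mixedOneGap x C u t

/-- The generating function of `mixed 1 0 1` divided by `C ^ 2`. -/
def mixedScale : R := 1 + x * mixedGap x C u t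

/-- The coefficient of `m` in the generating function of `decreasing m`. -/
def decreasingSlope : R :=
  x * u * ((C * mixedScale x C u t - u) * C ^ 2 + mixedGap x C u t)

/-- The closed form of the generating function `∑ k, L.levelCount k * x ^ k` of a reachable label,
where `C`, `u`, `t` stand for the Catalan series, `1 / (1 - x)` and `1 / (1 - 2 * x)`. -/
def labelGF : SiteLabel → R
  | decreasing m =>
    u * (1 - C ^ 2 + x * decreasingSlope x C u t) + decreasingSlope x C u t * m +
      (1 - x) * t * C ^ 2 * u ^ m
  | mixed 0 f d => if d = 0 then u ^ (f + 1) else t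
  | mixed 1 _ d => C ^ 2 * mixedScale x C u t + if d = 1 then 0 else mixedOneGap x C u t
  | mixed (c + 2) f d =>
    (C * mixedScale x C u t - u + u ^ (f + 1)) * C ^ (c + 2) +
      if d = 1 then 0 else mixedGap x C u t

variable {x C u t}

theorem one_sub_mul_mixedOneGap (hu : (1 - x) * u = 1) (C t : R) :
    (1 - x) * mixedOneGap x C u t = x * ((u ^ 2 - u) * C ^ 2 + t) := by
  rw [mixedOneGap]
  linear_combination x * ((u ^ 2 - u) * C ^ 2 + t) * hu

theorem one_sub_mul_mixedGap (hu : (1 - x) * u = 1) (C t : R) :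
    (1 - x) * mixedGap x C u t = x * mixedOneGap x C u t := by
  rw [mixedGap]
  linear_combination x * mixedOneGap x C u t * hu

theorem mul_sum_range_pow_sub {y w : R} (h : x * y ^ 2 = (y - 1) * w) (n : ℕ) :
    x * ∑ i ∈ range n, y ^ (n + 1 - i) = w * (y ^ n - 1) := by
  have sum_eq : ∑ i ∈ range n, y ^ (n + 1 - i) = y ^ 2 * ∑ i ∈ range n, y ^ i := by
    rw [← sum_range_reflect (fun i => y ^ i), mul_sum]
    refine sum_congr rfl fun i hi => ?_
    rw [mem_range] at hi
    rw [← pow_add]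
    congr 1
    omega
  rw [sum_eq, ← mul_geom_sum]
  linear_combination h * ∑ i ∈ range n, y ^ i

theorem labelGF_decreasing_eq_one_add (hu : (1 - x) * u = 1) (ht : (1 - 2 * x) * t = 1) (m : ℕ) :
    labelGF x C u t (decreasing m) =
      1 + x * ∑ i ∈ range (m + 1), labelGF x C u t ((decreasing m).child i) := by
  have geom : x * ∑ i ∈ range m, u ^ (i + 1) = u ^ m - 1 := by
    rw [← mul_geom_sum, mul_sum, mul_sum]
    exact sum_congr rfl fun i _ => by linear_combination -u ^ i * hu
  have mixed_sum : x * ∑ i ∈ range m, labelGF x C u t (mixed 2 i 2) =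
      (1 - x) * decreasingSlope x C u t * m + C ^ 2 * (u ^ m - 1) := by
    simp only [labelGF, OfNat.ofNat_ne_one, if_false, sum_add_distrib, sum_const, card_range,
      nsmul_eq_mul, ← sum_mul]
    rw [← geom, decreasingSlope]
    linear_combination
      -x * m * ((C * mixedScale x C u t - u) * C ^ 2 + mixedGap x C u t) * hu
  rw [sum_child_decreasing, mul_add, mixed_sum]
  simp only [labelGF, Nat.cast_add, Nat.cast_one, pow_succ]
  linear_combination (1 - C ^ 2 + x * decreasingSlope x C u t - x * t * C ^ 2 * u ^ m) * hu +
    C ^ 2 * u ^ m * ht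

theorem sum_labelGF_mixed_add_two (c f d : ℕ) (hd : d = 1 ∨ d = 2) :
    ∑ i ∈ range (c + 2), labelGF x C u t (mixed (c + 3 - i) f (1 + if i < d then 1 else 0)) =
      (C * mixedScale x C u t - u + u ^ (f + 1)) * ∑ i ∈ range (c + 2), C ^ (c + 3 - i) +
        d * mixedGap x C u t := by
  have summand (i : ℕ) (hi : i ∈ range (c + 2)) :
      labelGF x C u t (mixed (c + 3 - i) f (1 + if i < d then 1 else 0)) =
        (C * mixedScale x C u t - u + u ^ (f + 1)) * C ^ (c + 3 - i) +
          if i < d then mixedGap x C u t else 0 := by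
    rw [mem_range] at hi
    obtain ⟨e, he⟩ : ∃ e, c + 3 - i = e + 2 := ⟨c + 1 - i, by omega⟩
    rw [he]
    split_ifs <;> simp [labelGF]
  have filter_lt : (range (c + 2)).filter (· < d) = range d := by
    ext i
    simp only [mem_filter, mem_range]
    omega
  rw [sum_congr rfl summand, sum_add_distrib, ← mul_sum, ← sum_filter, filter_lt, sum_const,
    card_range, nsmul_eq_mul]

theorem mul_sum_labelGF_mixed_zero (hu : (1 - x) * u = 1) {c d : ℕ} (hd : d ≤ c) (f : ℕ) :
    x * ∑ i ∈ range f, labelGF x C u t (mixed 0 (f - i) (if c + i < d then 1 else 0)) =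
      u * (u ^ f - 1) := by
  rw [← mul_sum_range_pow_sub (by linear_combination -u * hu : x * u ^ 2 = (u - 1) * u)]
  congr 1
  refine sum_congr rfl fun i hi => ?_
  rw [mem_range] at hi
  rw [if_neg (by omega), labelGF, if_pos rfl, Nat.sub_add_comm hi.le]

theorem labelGF_mixed_add_two_eq_one_add (hC : C = 1 + x * C ^ 2) (hu : (1 - x) * u = 1)
    (c f d : ℕ) (hd : d = 1 ∨ d = 2) :
    labelGF x C u t (mixed (c + 2) f d) =
      1 + x * ∑ i ∈ range (c + 2 + f + 1), labelGF x C u t ((mixed (c + 2) f d).child i) := by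
  have catalan_sum : x * ∑ i ∈ range (c + 2), C ^ (c + 3 - i) = 1 * (C ^ (c + 2) - 1) :=
    mul_sum_range_pow_sub (by linear_combination -hC) _
  rw [sum_child_mixed, sum_labelGF_mixed_add_two c f d hd, mul_add, mul_add, mul_add,
    mul_sum_labelGF_mixed_zero hu (by omega), mul_left_comm, catalan_sum,
    Nat.min_eq_right (by omega)]
  rcases hd with rfl | rfl
  · simp only [labelGF, if_true, mixedScale, Nat.cast_one, pow_succ u]
    linear_combination (1 + x * mixedGap x C u t) * hC
  · simp only [labelGF, OfNat.ofNat_ne_one, if_false, mixedScale, Nat.cast_ofNat, pow_succ u]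
    linear_combination (1 + x * mixedGap x C u t) * hC + one_sub_mul_mixedGap hu C t

theorem labelGF_mixed_zero_zero_eq_one_add (hu : (1 - x) * u = 1) (f : ℕ) :
    labelGF x C u t (mixed 0 f 0) =
      1 + x * ∑ i ∈ range (0 + f + 1), labelGF x C u t ((mixed 0 f 0).child i) := by
  rw [sum_child_mixed, mul_add, mul_add, mul_sum_labelGF_mixed_zero hu le_rfl]
  simp only [labelGF, if_true, range_zero, sum_empty, Nat.zero_min, Nat.sub_self]
  linear_combination hu

theorem labelGF_mixed_zero_one_one_eq_one_add (ht : (1 - 2 * x) * t = 1) :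
    labelGF x C u t (mixed 0 1 1) =
      1 + x * ∑ i ∈ range 2, labelGF x C u t ((mixed 0 1 1).child i) := by
  simp only [labelGF, one_ne_zero, ↓reduceIte, child, not_lt_zero, zero_add, Order.lt_one_iff,
    zero_le, inf_of_le_left, tsub_zero, sum_range_succ, range_one, sum_singleton]
  linear_combination ht

theorem labelGF_mixed_one_zero_one_eq_one_add (hC : C = 1 + x * C ^ 2) :
    labelGF x C u t (mixed 1 0 1) =
      1 + x * ∑ i ∈ range 2, labelGF x C u t ((mixed 1 0 1).child i) := by
  simp only [labelGF, mixedScale, ↓reduceIte, add_zero, child, Order.lt_one_iff, Nat.reduceAdd,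
    min_self, tsub_self, sum_range_succ, range_one, sum_singleton, tsub_zero, zero_add, pow_one,
    sub_add_cancel, OfNat.ofNat_ne_one, one_ne_zero]
  linear_combination (C + 1) * (1 + x * mixedGap x C u t) * hC

theorem labelGF_mixed_one_one_two_eq_one_add (hC : C = 1 + x * C ^ 2) (hu : (1 - x) * u = 1) :
    labelGF x C u t (mixed 1 1 2) =
      1 + x * ∑ i ∈ range 3, labelGF x C u t ((mixed 1 1 2).child i) := by
  simp only [labelGF, mixedScale, OfNat.ofNat_ne_one, ↓reduceIte, child, Order.lt_one_iff,
    Nat.reduceAdd, Order.lt_two_iff, min_self, Nat.add_one_sub_one, sum_range_succ, range_one,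
    sum_singleton, tsub_zero, zero_le, zero_add, one_ne_zero, Std.le_refl, OfNat.ofNat_ne_zero,
    Nat.not_ofNat_le_one]
  linear_combination (C + 1) * (1 + x * mixedGap x C u t) * hC +
    one_sub_mul_mixedOneGap hu C t

theorem labelGF_eq_one_add (hC : C = 1 + x * C ^ 2) (hu : (1 - x) * u = 1)
    (ht : (1 - 2 * x) * t = 1) {L : SiteLabel} (hL : L.IsReachable) :
    labelGF x C u t L = 1 + x * ∑ i ∈ range (L.top + 1), labelGF x C u t (L.child i) := by
  cases L with
  | decreasing m => exact labelGF_decreasing_eq_one_add hu ht m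
  | mixed c f d =>
    rcases hL with ⟨rfl, rfl⟩ | ⟨rfl, rfl, rfl⟩ | ⟨rfl, rfl, rfl⟩ | ⟨rfl, rfl, rfl⟩ | ⟨hc, hd⟩
    · exact labelGF_mixed_zero_zero_eq_one_add hu f
    · exact labelGF_mixed_zero_one_one_eq_one_add ht
    · exact labelGF_mixed_one_zero_one_eq_one_add hC
    · exact labelGF_mixed_one_one_two_eq_one_add hC hu
    · obtain ⟨c, rfl⟩ := Nat.exists_eq_add_of_le' hc
      exact labelGF_mixed_add_two_eq_one_add hC hu c f d hd

theorem labelGF_decreasing_zero (hC : C = 1 + x * C ^ 2) (hu : (1 - x) * u = 1)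
    (ht : (1 - 2 * x) * t = 1) :
    (1 - x) ^ 5 * (1 - 2 * x) * labelGF x C u t (decreasing 0) =
      (1 - 3 * x + 3 * x ^ 2) ^ 2 * C - x * (1 - x) * (1 - 3 * x + 5 * x ^ 2 - 4 * x ^ 3) := by
  simp only [labelGF, decreasingSlope, mixedScale, mixedGap, mixedOneGap]
  grind

end ClosedForm

end SiteLabel

theorem catalanGF_eq : catalanGF = 1 + X * catalanGF ^ 2 := by
  have map_eq : PowerSeries.map (Nat.castRingHom ℚ) catalanSeries = catalanGF := by
    ext n
    simp [catalanGF]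
  have h := congrArg (PowerSeries.map (Nat.castRingHom ℚ)) catalanSeries_sq_mul_X_add_one
  simp only [map_add, map_mul, map_pow, map_one, PowerSeries.map_X, map_eq] at h
  linear_combination -h

end GeneratingFunctions

theorem statement_9 :
    ((1 : PowerSeries ℚ) - X)^5 * (1 - 2*X) * avoiderGF ({![0,2,3,1], ![1,2,0,3], ![2,3,0,1]} : Set (Fin 4 → Fin 4)) =
      (1 - 3*X + 3*X^2)^2 * catalanGF - X * (1 - X) * (1 - 3*X + 5*X^2 - 4*X^3) := by
  have hu : ((1 : PowerSeries ℚ) - X) * (1 - X)⁻¹ = 1 :=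
    PowerSeries.mul_inv_cancel _ (by simp)
  have ht : ((1 : PowerSeries ℚ) - 2 * X) * (1 - 2 * X)⁻¹ = 1 :=
    PowerSeries.mul_inv_cancel _ (by simp)
  rw [← SiteLabel.labelGF_decreasing_zero catalanGF_eq hu ht]
  congr 1
  ext n
  rw [avoiderGF, coeff_mk, avoiderCount_eq_levelCount,
    SiteLabel.coeff_eq_levelCount (L := .decreasing 0)
      (fun _ => SiteLabel.labelGF_eq_one_add catalanGF_eq hu ht) trivial]
end

section
/- Let T = {1423, 2341, 3142} (patterns of length 4). Then the generating function for T-avoiders satisfies, as formal power series over ℚ, (1 - 7x + 17x^2 - 20x^3 + 12x^4 - 2x^5)·F_T(x) = 1 - 6x + 12x^2 - 11x^3 + 5x^4; that is, F_T(x) = (1-6x+12x^2-11x^3+5x^4)/(1-7x+17x^2-20x^3+12x^4-2x^5). -/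
open PowerSeries

/-!
Every avoider of length `n + 1` arises from one of length `n` by inserting the new maximum at an
active slot, a slot not straddled by an occurrence of 1|23, 23|1 or 31|2. The two outermost slots
are always active. Every nonempty avoider is in one of two kinds of states, layered or blocked, and
its label (two run lengths, or the number of interior active slots) determines the labels of all
its children. The resulting succession rule turns into linear equations between the generating
functions of the labels. The infinite families among them are solved by guessing a closed form: the
errors satisfy `E t = X * E (t + 1)`, so every `E t` is divisible by all powers of `X` and vanishes.
-/

namespace GeneratingTree

section Words

variable {α : Type*} {n u v : ℕ} {M : α} {w : ℕ → α}

/-- The position, after a letter has been inserted at slot `v`, of the letter formerly at position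
`i`. Slots are numbered so that slot `v` is the gap just before position `v`. -/
def skip (v i : ℕ) : ℕ := if i < v then i else i + 1

/-- The word `w` with the letter `M` inserted at slot `v`. Words are functions on `ℕ` accompanied by
a length `n`; letters at positions `≥ n` are irrelevant. -/
def insertAt (v : ℕ) (M : α) (w : ℕ → α) (i : ℕ) : α :=
  if i < v then w i else if i = v then M else w (i - 1)

lemma insertAt_self : insertAt v M w v = M := by simp [insertAt]

lemma insertAt_skip (i : ℕ) : insertAt v M w (skip v i) = w i := by grind [insertAt, skip]

lemma exists_skip_eq {i : ℕ} (hi : i ≠ v) : ∃ j, skip v j = i :=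
  ⟨if i < v then i else i - 1, by grind [skip]⟩

variable [LinearOrder α]

lemma insertAt_le (hM : ∀ i < n, w i < M) (hv : v ≤ n) {i : ℕ} (hi : i < n + 1) :
    insertAt v M w i ≤ M := by
  grind [insertAt]

lemma exists_skip_eq_of_insertAt_lt (hM : ∀ i < n, w i < M) (hv : v ≤ n) {i j : ℕ}
    (hj : j < n + 1) (h : insertAt v M w i < insertAt v M w j) : ∃ k, skip v k = i :=
  exists_skip_eq fun hi ↦ by
    have := insertAt_le hM hv hj
    grind [insertAt_self]

/-- The word `w 0, …, w (n - 1)` avoids the patterns 1423, 2341 and 3142. -/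
structure Avoids (n : ℕ) (w : ℕ → α) : Prop where
  no_1423 : ∀ i j k l, i < j → j < k → k < l → l < n → w i < w k → w k < w l → w j ≤ w l
  no_2341 : ∀ i j k l, i < j → j < k → k < l → l < n → w l < w i → w i < w j → w k ≤ w j
  no_3142 : ∀ i j k l, i < j → j < k → k < l → l < n → w j < w l → w l < w i → w k ≤ w i

/-- Slot `v` of a word of length `n` is active: inserting a new maximum there creates none of the
patterns 1423, 2341, 3142. Deleting the 4 from these patterns leaves 1|23, 23|1 and 31|2, where the
bar marks the slot, and no occurrence of these may straddle `v`. -/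
structure Active (n : ℕ) (w : ℕ → α) (v : ℕ) : Prop where
  no_1_23 : ∀ i j k, i < v → v ≤ j → j < k → k < n → w i < w j → w k ≤ w j
  no_23_1 : ∀ i j k, i < j → j < v → v ≤ k → k < n → w k < w i → w j ≤ w i
  no_31_2 : ∀ i j k, i < j → j < v → v ≤ k → k < n → w j < w k → w i ≤ w k

lemma Avoids.of_insertAt (h : Avoids (n + 1) (insertAt v M w)) : Avoids n w where
  no_1423 i j k l := by
    have := h.no_1423 (skip v i) (skip v j) (skip v k) (skip v l)
    grind [insertAt_skip, skip]
  no_2341 i j k l := by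
    have := h.no_2341 (skip v i) (skip v j) (skip v k) (skip v l)
    grind [insertAt_skip, skip]
  no_3142 i j k l := by
    have := h.no_3142 (skip v i) (skip v j) (skip v k) (skip v l)
    grind [insertAt_skip, skip]

lemma Active.of_avoids_insertAt (hM : ∀ i < n, w i < M) (h : Avoids (n + 1) (insertAt v M w)) :
    Active n w v where
  no_1_23 i j k := by
    have := h.no_1423 i v (j + 1) (k + 1)
    grind [insertAt]
  no_23_1 i j k := by
    have := h.no_2341 i j v (k + 1)
    grind [insertAt]
  no_31_2 i j k := by
    have := h.no_3142 i j v (k + 1)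
    grind [insertAt]

lemma Avoids.insertAt_of_active (hM : ∀ i < n, w i < M) (hv : v ≤ n) (h : Avoids n w)
    (hact : Active n w v) : Avoids (n + 1) (insertAt v M w) where
  no_1423 i j k l hij hjk hkl hl hik hkl' := by
    by_contra! hlj
    obtain ⟨i, rfl⟩ := exists_skip_eq_of_insertAt_lt hM hv (by omega) hik
    obtain ⟨k, rfl⟩ := exists_skip_eq_of_insertAt_lt hM hv (by omega) hkl'
    obtain ⟨l, rfl⟩ := exists_skip_eq_of_insertAt_lt hM hv (by omega) hlj
    obtain rfl | ⟨j, rfl⟩ := (eq_or_ne j v).imp_right exists_skip_eq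
    · have := hact.no_1_23 i k l
      grind [insertAt_skip, skip]
    · have := h.no_1423 i j k l
      grind [insertAt_skip, skip]
  no_2341 i j k l hij hjk hkl hl hli hij' := by
    by_contra! hjk'
    obtain ⟨i, rfl⟩ := exists_skip_eq_of_insertAt_lt hM hv (by omega) hij'
    obtain ⟨j, rfl⟩ := exists_skip_eq_of_insertAt_lt hM hv (by omega) hjk'
    obtain ⟨l, rfl⟩ := exists_skip_eq_of_insertAt_lt hM hv (by omega) hli
    obtain rfl | ⟨k, rfl⟩ := (eq_or_ne k v).imp_right exists_skip_eq
    · have := hact.no_23_1 i j l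
      grind [insertAt_skip, skip]
    · have := h.no_2341 i j k l
      grind [insertAt_skip, skip]
  no_3142 i j k l hij hjk hkl hl hjl hli := by
    by_contra! hik
    obtain ⟨i, rfl⟩ := exists_skip_eq_of_insertAt_lt hM hv (by omega) hik
    obtain ⟨j, rfl⟩ := exists_skip_eq_of_insertAt_lt hM hv (by omega) hjl
    obtain ⟨l, rfl⟩ := exists_skip_eq_of_insertAt_lt hM hv (by omega) hli
    obtain rfl | ⟨k, rfl⟩ := (eq_or_ne k v).imp_right exists_skip_eq
    · have := hact.no_31_2 i j l
      grind [insertAt_skip, skip]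
    · have := h.no_3142 i j k l
      grind [insertAt_skip, skip]

lemma avoids_insertAt_iff (hM : ∀ i < n, w i < M) (hv : v ≤ n) :
    Avoids (n + 1) (insertAt v M w) ↔ Avoids n w ∧ Active n w v :=
  ⟨fun h ↦ ⟨h.of_insertAt, .of_avoids_insertAt hM h⟩,
    fun ⟨h, hact⟩ ↦ h.insertAt_of_active hM hv hact⟩

lemma active_zero : Active n w 0 := by constructor <;> omega

lemma active_length : Active n w n := by constructor <;> omega

lemma Active.of_insertAt {u' : ℕ} (hu : ∀ i, skip v i < u' ↔ i < u)
    (h : Active (n + 1) (insertAt v M w) u') : Active n w u where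
  no_1_23 i j k := by
    have := h.no_1_23 (skip v i) (skip v j) (skip v k)
    grind [insertAt_skip, skip]
  no_23_1 i j k := by
    have := h.no_23_1 (skip v i) (skip v j) (skip v k)
    grind [insertAt_skip, skip]
  no_31_2 i j k := by
    have := h.no_31_2 (skip v i) (skip v j) (skip v k)
    grind [insertAt_skip, skip]

lemma active_insertAt_iff (hM : ∀ i < n, w i < M) (huv : u ≤ v) (hv : v ≤ n) :
    Active (n + 1) (insertAt v M w) u ↔
      Active n w u ∧ ∀ i j, i < u → u ≤ j → j < v → w j ≤ w i := by
  refine ⟨fun h ↦ ⟨h.of_insertAt (by grind [skip]), fun i j ↦ ?_⟩,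
    fun ⟨h, _⟩ ↦ ⟨?_, ?_, ?_⟩⟩
  · have := h.no_1_23 i j v
    grind [insertAt]
  · have := h.no_1_23
    grind [insertAt]
  · have := h.no_23_1
    grind [insertAt]
  · have := h.no_31_2
    grind [insertAt]

lemma active_insertAt_succ_iff (hM : ∀ i < n, w i < M) (hvu : v ≤ u) (hu : u ≤ n) :
    Active (n + 1) (insertAt v M w) (u + 1) ↔
      Active n w u ∧ (∀ i j, i < v → u ≤ j → j < n → w i ≤ w j) ∧
        ∀ i j, v ≤ i → i < u → u ≤ j → j < n → w j ≤ w i := by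
  refine ⟨fun h ↦ ⟨h.of_insertAt (by grind [skip]), fun i j ↦ ?_, fun i j ↦ ?_⟩,
    fun ⟨h, hlow, hhigh⟩ ↦ ⟨?_, ?_, ?_⟩⟩
  · have := h.no_23_1 i v (j + 1)
    grind [insertAt]
  · have := h.no_31_2 v (i + 1) (j + 1)
    grind [insertAt]
  · have := h.no_1_23
    grind [insertAt]
  · intro i j k hij hj hk hkn hki
    by_contra! hij'
    obtain ⟨i, rfl⟩ := exists_skip_eq_of_insertAt_lt hM (hvu.trans hu) (by omega) hij'
    obtain ⟨k, rfl⟩ := exists_skip_eq_of_insertAt_lt hM (hvu.trans hu) (by omega) hki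
    obtain rfl | ⟨j, rfl⟩ := (eq_or_ne j v).imp_right exists_skip_eq
    · have := hlow i k
      grind [insertAt_skip, skip]
    · have := h.no_23_1 i j k
      grind [insertAt_skip, skip]
  · intro i j k hij hj hk hkn hjk
    by_contra! hki
    obtain ⟨j, rfl⟩ := exists_skip_eq_of_insertAt_lt hM (hvu.trans hu) (by omega) hjk
    obtain ⟨k, rfl⟩ := exists_skip_eq_of_insertAt_lt hM (hvu.trans hu) (by omega) hki
    obtain rfl | ⟨i, rfl⟩ := (eq_or_ne i v).imp_right exists_skip_eq
    · have := hhigh j k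
      grind [insertAt_skip, skip]
    · have := h.no_31_2 i j k
      grind [insertAt_skip, skip]

lemma le_or_exists_succ_eq (u v : ℕ) : u ≤ v ∨ ∃ u', v ≤ u' ∧ u' + 1 = u :=
  (le_or_gt u v).imp_right fun h ↦ ⟨u - 1, by omega, by omega⟩

open Classical in
/-- The active slots of a word of length `n` other than the two outermost slots `0` and `n`. -/
noncomputable def interiorSlots (n : ℕ) (w : ℕ → α) : Finset ℕ :=
  {v ∈ Finset.Ioo 0 n | Active n w v}

lemma mem_interiorSlots : v ∈ interiorSlots n w ↔ 0 < v ∧ v < n ∧ Active n w v := by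
  simp [interiorSlots, and_assoc]

lemma active_iff_mem_interiorSlots (hv : v ≤ n) :
    Active n w v ↔ v = 0 ∨ v = n ∨ v ∈ interiorSlots n w := by
  grind [mem_interiorSlots, active_zero, active_length]

lemma mem_interiorSlots_insertAt (hM : ∀ i < n, w i < M) (huv : u ≤ v) (hv : v ≤ n) :
    u ∈ interiorSlots (n + 1) (insertAt v M w) ↔
      0 < u ∧ (u = n ∨ u ∈ interiorSlots n w) ∧ ∀ i j, i < u → u ≤ j → j < v → w j ≤ w i := by
  rw [mem_interiorSlots, active_insertAt_iff hM huv hv, active_iff_mem_interiorSlots (by omega)]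
  grind

lemma succ_mem_interiorSlots_insertAt (hM : ∀ i < n, w i < M) (hvu : v ≤ u) (hu : u ≤ n) :
    u + 1 ∈ interiorSlots (n + 1) (insertAt v M w) ↔
      u < n ∧ (u = 0 ∨ u ∈ interiorSlots n w) ∧
        (∀ i j, i < v → u ≤ j → j < n → w i ≤ w j) ∧
          ∀ i j, v ≤ i → i < u → u ≤ j → j < n → w j ≤ w i := by
  rw [mem_interiorSlots, active_insertAt_succ_iff hM hvu hu, active_iff_mem_interiorSlots hu]
  grind

/-- Some letter before slot `v` is smaller than some letter after it. Inserting a maximum at either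
end of the word then deactivates the slot `v`. -/
def AscentAcross (n : ℕ) (w : ℕ → α) (v : ℕ) : Prop :=
  ∃ i j, i < v ∧ v ≤ j ∧ j < n ∧ w i < w j

/-- The state of a word whose last `t` letters are decreasing and exceed all others, whose first `s`
letters are decreasing and exceed everything up to the last `t` letters, and whose active slots are
exactly those touching one of these two runs, besides the outermost ones. -/
structure IsLayered (n : ℕ) (w : ℕ → α) (s t : ℕ) : Prop where
  add_lt : s + t < n
  head_anti : ∀ i j, i < s → i < j → j + t < n → w j < w i
  tail_anti : ∀ i j, n ≤ i + t → i < j → j < n → w j < w i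
  head_lt_tail : ∀ i j, i + t < n → n ≤ j + t → j < n → w i < w j
  mem_interior : ∀ v, 0 < v → v < n → (v ∈ interiorSlots n w ↔ v ≤ s ∨ n ≤ v + t)

/-- The state of a word in which inserting a maximum at an interior active slot `v` keeps the
interior active slots `u ≤ v` (by `anti`) and deactivates those to the right of `v` (by
`inversion`), while inserting it at either end deactivates all of them (by `ascent`). -/
structure IsBlocked (n : ℕ) (w : ℕ → α) : Prop where
  pos : 0 < n
  ascent : ∀ v ∈ interiorSlots n w, AscentAcross n w v
  inversion : ∀ u ∈ interiorSlots n w, ∀ v ∈ interiorSlots n w, u ≤ v →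
    ∃ i j, i < u ∧ v ≤ j ∧ j < n ∧ w j < w i
  anti : ∀ u ∈ interiorSlots n w, ∀ v ∈ interiorSlots n w,
    ∀ i j, i < u → u ≤ j → j < v → w j ≤ w i

lemma IsLayered.ascentAcross {s t : ℕ} (h : IsLayered n w s (t + 1)) :
    ∀ v ∈ interiorSlots n w, AscentAcross n w v := fun v hv ↦ by
  obtain ⟨hv0, hvn, -⟩ := mem_interiorSlots.mp hv
  have := h.add_lt
  exact ⟨0, n - 1, hv0, by omega, by omega, h.head_lt_tail _ _ (by omega) (by omega) (by omega)⟩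

lemma isLayered_insertAt_zero (hM : ∀ i < n, w i < M) (hn : 0 < n)
    (hasc : ∀ v ∈ interiorSlots n w, AscentAcross n w v) :
    IsLayered (n + 1) (insertAt 0 M w) 1 0 where
  add_lt := by omega
  head_anti := by grind [insertAt]
  tail_anti := by omega
  head_lt_tail := by omega
  mem_interior
    | u + 1, _, hu => by
      rw [succ_mem_interiorSlots_insertAt hM u.zero_le (by omega)]
      grind [AscentAcross]

lemma isLayered_insertAt_length (hM : ∀ i < n, w i < M) (hn : 0 < n)
    (hasc : ∀ v ∈ interiorSlots n w, AscentAcross n w v) :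
    IsLayered (n + 1) (insertAt n M w) 0 1 where
  add_lt := by omega
  head_anti := by omega
  tail_anti := by omega
  head_lt_tail := by grind [insertAt]
  mem_interior u _ hu := by
    rw [mem_interiorSlots_insertAt hM (by omega) le_rfl]
    grind [AscentAcross]

lemma IsLayered.insertAt_zero {s : ℕ} (hM : ∀ i < n, w i < M) (h : IsLayered n w s 0) :
    IsLayered (n + 1) (insertAt 0 M w) (s + 1) 0 where
  add_lt := by grind [h.add_lt]
  head_anti := by grind [insertAt, h.head_anti]
  tail_anti := by omega
  head_lt_tail := by omega
  mem_interior
    | u + 1, _, hu => by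
      have hanti i j (hi : i < s) (hij : i < j) (hj : j < n) : w j ≤ w i :=
        (h.head_anti i j hi hij hj).le
      rw [succ_mem_interiorSlots_insertAt hM u.zero_le (by omega)]
      grind [h.mem_interior, h.add_lt]

lemma IsLayered.insertAt_tail {s t : ℕ} (hM : ∀ i < n, w i < M) (h : IsLayered n w s t)
    (hv : v + t = n) : IsLayered (n + 1) (insertAt v M w) s (t + 1) where
  add_lt := by grind [h.add_lt]
  head_anti := by grind [insertAt, h.head_anti]
  tail_anti := by grind [insertAt, h.tail_anti]
  head_lt_tail := by grind [insertAt, h.head_lt_tail]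
  mem_interior u hu0 hu := by
    have := h.add_lt
    obtain huv | ⟨u, hvu, rfl⟩ := le_or_exists_succ_eq u v
    · rw [mem_interiorSlots_insertAt hM huv (by omega)]
      have hanti (hu' : u ≤ s ∨ u = v) i j (hi : i < u) (huj : u ≤ j) (hj : j < v) : w j ≤ w i :=
        (h.head_anti i j (by omega) (by omega) (by omega)).le
      grind [h.mem_interior]
    · rw [succ_mem_interiorSlots_insertAt hM hvu (by omega)]
      have hlow i j (hi : i < v) (huj : u ≤ j) (hj : j < n) : w i ≤ w j :=
        (h.head_lt_tail i j (by omega) (by omega) hj).le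
      have hhigh i j (hi : v ≤ i) (hiu : i < u) (huj : u ≤ j) (hj : j < n) : w j ≤ w i :=
        (h.tail_anti i j (by omega) (by omega) hj).le
      grind [h.mem_interior]

lemma isBlocked_insertAt (hM : ∀ i < n, w i < M) (hv : v < n)
    (h : ∀ u ∈ interiorSlots (n + 1) (insertAt v M w),
      u ≤ v ∧ ∃ i j, i < u ∧ v ≤ j ∧ j < n ∧ w j < w i) :
    IsBlocked (n + 1) (insertAt v M w) where
  pos := n.succ_pos
  ascent u hu := by
    have := (h u hu).1
    have := (mem_interiorSlots.mp hu).1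
    exact ⟨0, v, by grind [insertAt]⟩
  inversion u hu u' hu' huu' := by
    obtain ⟨i, j, hi, hj, hjn, hji⟩ := (h u hu).2
    have := (h u' hu').1
    exact ⟨i, j + 1, by grind [insertAt]⟩
  anti u hu u' hu' i j hi hj hju' := by
    have := (h u' hu').1
    have := ((mem_interiorSlots_insertAt hM (h u hu).1 hv.le).mp hu).2.2 i j
    grind [insertAt]

lemma IsBlocked.interiorSlots_insertAt (hM : ∀ i < n, w i < M) (h : IsBlocked n w)
    (hv : v ∈ interiorSlots n w) :
    interiorSlots (n + 1) (insertAt v M w) = {u ∈ interiorSlots n w | u ≤ v} := by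
  obtain ⟨-, hvn, -⟩ := mem_interiorSlots.mp hv
  ext u
  obtain huv | ⟨u, hvu, rfl⟩ := le_or_exists_succ_eq u v
  · rw [mem_interiorSlots_insertAt hM huv hvn.le]
    grind [h.anti, mem_interiorSlots]
  · obtain hun | hun := le_or_gt u n
    · rw [succ_mem_interiorSlots_insertAt hM hvu hun]
      grind [h.inversion, mem_interiorSlots]
    · grind [mem_interiorSlots]

lemma IsBlocked.insertAt_of_mem (hM : ∀ i < n, w i < M) (h : IsBlocked n w)
    (hv : v ∈ interiorSlots n w) : IsBlocked (n + 1) (insertAt v M w) := by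
  refine isBlocked_insertAt hM (mem_interiorSlots.mp hv).2.1 fun u hu ↦ ?_
  rw [h.interiorSlots_insertAt hM hv, Finset.mem_filter] at hu
  exact ⟨hu.2, h.inversion u hu.1 v hv hu.2⟩

lemma IsLayered.interiorSlots_insertAt_head {s t : ℕ} (hM : ∀ i < n, w i < M)
    (h : IsLayered n w s t) (hv0 : 0 < v) (hvs : v ≤ s) :
    interiorSlots (n + 1) (insertAt v M w) = Finset.Icc 1 v := by
  have := h.add_lt
  ext u
  obtain huv | ⟨u, hvu, rfl⟩ := le_or_exists_succ_eq u v
  · rw [mem_interiorSlots_insertAt hM huv (by omega)]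
    have hanti i j (hi : i < u) (huj : u ≤ j) (hj : j < v) : w j ≤ w i :=
      (h.head_anti i j (by omega) (by omega) (by omega)).le
    grind [h.mem_interior]
  · refine iff_of_false (fun hu ↦ ?_) (by grind)
    have hun : u < n := by grind [mem_interiorSlots]
    obtain ⟨-, hu, hlow, hhigh⟩ := (succ_mem_interiorSlots_insertAt hM hvu hun.le).mp hu
    obtain hus | hut : u ≤ s ∨ n ≤ u + t := by grind [h.mem_interior]
    · have hinv := h.head_anti 0 (n - t - 1) (by omega) (by omega) (by omega)
      exact (hlow 0 (n - t - 1) hv0 (by omega) (by omega)).not_gt hinv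
    · have hasc := h.head_lt_tail (n - t - 1) u (by omega) hut hun
      exact (hhigh (n - t - 1) u (by omega) (by omega) le_rfl hun).not_gt hasc

lemma IsLayered.isBlocked_insertAt_head {s t : ℕ} (hM : ∀ i < n, w i < M)
    (h : IsLayered n w s t) (hv0 : 0 < v) (hvs : v ≤ s) :
    IsBlocked (n + 1) (insertAt v M w) := by
  have := h.add_lt
  refine isBlocked_insertAt hM (by omega) fun u hu ↦ ?_
  rw [h.interiorSlots_insertAt_head hM hv0 hvs, Finset.mem_Icc] at hu
  exact ⟨hu.2, 0, n - t - 1, hu.1, by omega, by omega,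
    h.head_anti _ _ (by omega) (by omega) (by omega)⟩

lemma IsLayered.interiorSlots_insertAt_tail {s t : ℕ} (hM : ∀ i < n, w i < M)
    (h : IsLayered n w s t) (htv : n < v + t) (hvn : v < n) :
    interiorSlots (n + 1) (insertAt v M w) = {v} := by
  have := h.add_lt
  ext u
  rw [Finset.mem_singleton]
  obtain huv | ⟨u, hvu, rfl⟩ := le_or_exists_succ_eq u v
  · rw [mem_interiorSlots_insertAt hM huv hvn.le]
    refine ⟨fun ⟨hu0, _, hanti⟩ ↦ ?_, by grind [h.mem_interior]⟩
    have hasc := h.head_lt_tail 0 (v - 1) (by omega) (by omega) (by omega)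
    by_contra huv'
    exact (hanti 0 (v - 1) hu0 (by omega) (by omega)).not_gt hasc
  · refine iff_of_false (fun hu ↦ ?_) (by omega)
    have hun : u < n := by grind [mem_interiorSlots]
    obtain ⟨-, -, hlow, -⟩ := (succ_mem_interiorSlots_insertAt hM hvu hun.le).mp hu
    have hinv := h.tail_anti (n - t) u (by omega) (by omega) hun
    exact (hlow (n - t) u (by omega) le_rfl hun).not_gt hinv

lemma IsLayered.isBlocked_insertAt_tail {s t : ℕ} (hM : ∀ i < n, w i < M)
    (h : IsLayered n w s t) (htv : n < v + t) (hvn : v < n) :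
    IsBlocked (n + 1) (insertAt v M w) := by
  have := h.add_lt
  refine isBlocked_insertAt hM hvn fun u hu ↦ ?_
  rw [h.interiorSlots_insertAt_tail hM htv hvn, Finset.mem_singleton] at hu
  exact ⟨hu.le, n - t, v, by omega, le_rfl, hvn, h.tail_anti _ _ (by omega) (by omega) hvn⟩

end Words

section Counting

variable {n : ℕ} {w : ℕ → ℕ}

/-- The labels of the generating tree: blocked words are labelled by the number `k` of interior
active slots, layered words by the lengths `s`, `t` of their two runs. -/
inductive Label
  | blocked (k : ℕ)
  | layered (s t : ℕ)

/-- The word `w` of length `n` is in the state described by the label. -/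
def HasLabel (n : ℕ) (w : ℕ → ℕ) : Label → Prop
  | .blocked k => IsBlocked n w ∧ (interiorSlots n w).card = k
  | .layered s t => IsLayered n w s t

/-- The number of nodes `d` levels below a node with the given label in the generating tree,
computed by the succession rule. -/
def labelCount : ℕ → Label → ℕ
  | 0, _ => 1
  | d + 1, .blocked k =>
    labelCount d (.layered 1 0) + ∑ j ∈ Finset.Icc 1 k, labelCount d (.blocked j)
      + labelCount d (.layered 0 1)
  | d + 1, .layered s 0 =>
    labelCount d (.layered (s + 1) 0) + ∑ j ∈ Finset.Icc 1 s, labelCount d (.blocked j)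
      + labelCount d (.layered s 1)
  | d + 1, .layered s (t + 1) =>
    labelCount d (.layered 1 0) + (∑ j ∈ Finset.Icc 1 s, labelCount d (.blocked j)
      + (labelCount d (.layered s (t + 2)) + t * labelCount d (.blocked 1)))
      + labelCount d (.layered 0 1)

open Classical in
/-- The number of ways to insert `d` successive maxima `n, n + 1, …` into the word `w` of length
`n`, each at an active slot. -/
noncomputable def extensionCount : ℕ → ℕ → (ℕ → ℕ) → ℕ
  | 0, _, _ => 1
  | d + 1, n, w =>
    ∑ v ∈ Finset.range (n + 1) with Active n w v, extensionCount d (n + 1) (insertAt v n w)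

lemma extensionCount_succ (hn : 0 < n) (d : ℕ) :
    extensionCount (d + 1) n w = extensionCount d (n + 1) (insertAt 0 n w)
      + ∑ v ∈ interiorSlots n w, extensionCount d (n + 1) (insertAt v n w)
      + extensionCount d (n + 1) (insertAt n n w) := by
  classical
  have hslots : {v ∈ Finset.range (n + 1) | Active n w v} =
      insert n (insert 0 (interiorSlots n w)) := by
    grind [active_iff_mem_interiorSlots, mem_interiorSlots]
  rw [extensionCount, hslots, Finset.sum_insert (by grind [mem_interiorSlots]),
    Finset.sum_insert (by grind [mem_interiorSlots]), add_comm]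

lemma sum_card_filter_le {β M : Type*} [LinearOrder β] [AddCommMonoid M] (A : Finset β)
    (g : ℕ → M) :
    ∑ v ∈ A, g {u ∈ A | u ≤ v}.card = ∑ j ∈ Finset.Icc 1 A.card, g j := by
  induction A using Finset.induction_on_max with
  | empty => simp
  | insert a A ha ih =>
    have haA : a ∉ A := fun h ↦ (ha a h).false
    have hfilter : ∀ v ∈ A, {u ∈ insert a A | u ≤ v} = {u ∈ A | u ≤ v} := fun v hv ↦ by
      rw [Finset.filter_insert, if_neg (ha v hv).not_ge]
    have hfilter_self : {u ∈ insert a A | u ≤ a} = insert a A :=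
      Finset.filter_true_of_mem (by grind)
    rw [Finset.sum_insert haA, Finset.sum_congr rfl fun v hv ↦ by rw [hfilter v hv], ih,
      hfilter_self, Finset.card_insert_of_notMem haA, Finset.sum_Icc_succ_top (by omega), add_comm]

lemma IsBlocked.extensionCount_succ_eq {d : ℕ} (h : IsBlocked n w) (hw : ∀ i < n, w i < n)
    (ih : ∀ v l, v ≤ n → HasLabel (n + 1) (insertAt v n w) l →
      extensionCount d (n + 1) (insertAt v n w) = labelCount d l) :
    extensionCount (d + 1) n w = labelCount (d + 1) (.blocked (interiorSlots n w).card) := by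
  have hinterior : ∑ v ∈ interiorSlots n w, extensionCount d (n + 1) (insertAt v n w) =
      ∑ j ∈ Finset.Icc 1 (interiorSlots n w).card, labelCount d (.blocked j) := by
    rw [← sum_card_filter_le]
    exact Finset.sum_congr rfl fun v hv ↦ ih v _ (mem_interiorSlots.mp hv).2.1.le
      ⟨h.insertAt_of_mem hw hv, by rw [h.interiorSlots_insertAt hw hv]⟩
  rw [extensionCount_succ h.pos, labelCount, hinterior,
    ih 0 (.layered 1 0) n.zero_le (isLayered_insertAt_zero hw h.pos h.ascent),
    ih n (.layered 0 1) le_rfl (isLayered_insertAt_length hw h.pos h.ascent)]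

lemma IsLayered.sum_insertAt_head {d s t : ℕ} (h : IsLayered n w s t) (hw : ∀ i < n, w i < n)
    (ih : ∀ v l, v ≤ n → HasLabel (n + 1) (insertAt v n w) l →
      extensionCount d (n + 1) (insertAt v n w) = labelCount d l) :
    ∑ v ∈ Finset.Icc 1 s, extensionCount d (n + 1) (insertAt v n w) =
      ∑ j ∈ Finset.Icc 1 s, labelCount d (.blocked j) := by
  have := h.add_lt
  refine Finset.sum_congr rfl fun v hv ↦ ?_
  obtain ⟨hv0, hvs⟩ := Finset.mem_Icc.mp hv
  refine ih v _ (by omega) ⟨h.isBlocked_insertAt_head hw hv0 hvs, ?_⟩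
  rw [h.interiorSlots_insertAt_head hw hv0 hvs, Nat.card_Icc, Nat.add_sub_cancel]

lemma IsLayered.extensionCount_succ_eq_of_zero {d s : ℕ} (h : IsLayered n w s 0)
    (hw : ∀ i < n, w i < n)
    (ih : ∀ v l, v ≤ n → HasLabel (n + 1) (insertAt v n w) l →
      extensionCount d (n + 1) (insertAt v n w) = labelCount d l) :
    extensionCount (d + 1) n w = labelCount (d + 1) (.layered s 0) := by
  have hslots : interiorSlots n w = Finset.Icc 1 s := by
    grind [h.mem_interior, mem_interiorSlots, h.add_lt]
  rw [extensionCount_succ (by grind [h.add_lt]), labelCount, hslots, h.sum_insertAt_head hw ih,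
    ih 0 (.layered (s + 1) 0) n.zero_le (h.insertAt_zero hw),
    ih n (.layered s 1) le_rfl (h.insertAt_tail hw rfl)]

lemma IsLayered.extensionCount_succ_eq_of_succ {d s t : ℕ} (h : IsLayered n w s (t + 1))
    (hw : ∀ i < n, w i < n)
    (ih : ∀ v l, v ≤ n → HasLabel (n + 1) (insertAt v n w) l →
      extensionCount d (n + 1) (insertAt v n w) = labelCount d l) :
    extensionCount (d + 1) n w = labelCount (d + 1) (.layered s (t + 1)) := by
  have hadd := h.add_lt
  obtain ⟨m, rfl⟩ : ∃ m, n = m + (t + 1) := ⟨n - (t + 1), by omega⟩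
  have hslots : interiorSlots (m + (t + 1)) w =
      Finset.Icc 1 s ∪ insert m (Finset.Ioo m (m + (t + 1))) := by
    grind [h.mem_interior, mem_interiorSlots]
  have htail : ∑ v ∈ Finset.Ioo m (m + (t + 1)),
      extensionCount d (m + (t + 1) + 1) (insertAt v (m + (t + 1)) w) =
        t * labelCount d (.blocked 1) := by
    rw [Finset.sum_congr rfl fun v hv ↦ ?_, Finset.sum_const, Nat.card_Ioo, smul_eq_mul]
    · congr 1; omega
    · obtain ⟨hmv, hv⟩ := Finset.mem_Ioo.mp hv
      refine ih v (.blocked 1) hv.le ⟨h.isBlocked_insertAt_tail hw (by omega) hv, ?_⟩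
      rw [h.interiorSlots_insertAt_tail hw (by omega) hv, Finset.card_singleton]
  rw [extensionCount_succ (by omega), labelCount, hslots,
    Finset.sum_union (Finset.disjoint_left.mpr (by grind)), h.sum_insertAt_head hw ih,
    Finset.sum_insert (by simp), htail,
    ih m (.layered s (t + 2)) (by omega) (h.insertAt_tail hw rfl),
    ih 0 (.layered 1 0) (Nat.zero_le _) (isLayered_insertAt_zero hw (by omega) h.ascentAcross),
    ih _ (.layered 0 1) le_rfl (isLayered_insertAt_length hw (by omega) h.ascentAcross)]

theorem extensionCount_eq_labelCount (d : ℕ) {l : Label} (hw : ∀ i < n, w i < n)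
    (h : HasLabel n w l) : extensionCount d n w = labelCount d l := by
  induction d generalizing n w l with
  | zero => simp only [extensionCount, labelCount]
  | succ d ih =>
    have ih_insertAt (v : ℕ) (l : Label) (hv : v ≤ n) :
        HasLabel (n + 1) (insertAt v n w) l →
          extensionCount d (n + 1) (insertAt v n w) = labelCount d l :=
      ih fun _ hi ↦ Nat.lt_succ_of_le (insertAt_le hw hv hi)
    match l, h with
    | .blocked _, ⟨h, rfl⟩ => exact h.extensionCount_succ_eq hw ih_insertAt
    | .layered _ 0, h => exact IsLayered.extensionCount_succ_eq_of_zero h hw ih_insertAt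
    | .layered _ (_ + 1), h => exact IsLayered.extensionCount_succ_eq_of_succ h hw ih_insertAt

end Counting

section Permutations

variable {n : ℕ}

/-- The one-line notation of `π`, with values `0, …, n - 1`, padded by zeros. -/
def word (π : Equiv.Perm (Fin n)) (i : ℕ) : ℕ := if h : i < n then π ⟨i, h⟩ else 0

lemma word_val (π : Equiv.Perm (Fin n)) (i : Fin n) : word π i = π i := by simp [word]

lemma word_lt (π : Equiv.Perm (Fin n)) : ∀ i < n, word π i < n := fun i hi ↦ by simp [word, hi]

/-- The permutation of length `n + 1` obtained by inserting the new maximum at position `v`. -/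
def insertMax (π : Equiv.Perm (Fin n)) (v : Fin (n + 1)) : Equiv.Perm (Fin (n + 1)) :=
  (finSuccEquiv' v).trans (π.optionCongr.trans (finSuccEquiv' (Fin.last n)).symm)

lemma insertMax_self (π : Equiv.Perm (Fin n)) (v : Fin (n + 1)) :
    insertMax π v v = Fin.last n := by simp [insertMax]

lemma insertMax_succAbove (π : Equiv.Perm (Fin n)) (v : Fin (n + 1)) (i : Fin n) :
    insertMax π v (v.succAbove i) = (π i).castSucc := by simp [insertMax]

lemma insertMax_injective : Function.Injective
    fun q : Equiv.Perm (Fin n) × Fin (n + 1) ↦ insertMax q.1 q.2 := by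
  rintro ⟨π, v⟩ ⟨ρ, u⟩ (h : insertMax π v = insertMax ρ u)
  obtain rfl : v = u := (insertMax ρ u).injective <| by
    rw [insertMax_self, ← h, insertMax_self]
  obtain rfl : π = ρ := Equiv.ext fun i ↦ Fin.castSucc_injective n <| by
    rw [← insertMax_succAbove π v, h, insertMax_succAbove]
  rfl

lemma insertMax_bijective : Function.Bijective
    fun q : Equiv.Perm (Fin n) × Fin (n + 1) ↦ insertMax q.1 q.2 :=
  (Fintype.bijective_iff_injective_and_card _).mpr
    ⟨insertMax_injective, by simp [Fintype.card_perm, Nat.factorial_succ, mul_comm]⟩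

lemma val_succAbove (v : Fin (n + 1)) (i : Fin n) : (v.succAbove i : ℕ) = skip v i := by
  grind [Fin.succAbove, skip]

lemma word_insertMax (π : Equiv.Perm (Fin n)) (v : Fin (n + 1)) :
    word (insertMax π v) = insertAt v n (word π) := by
  ext i
  by_cases hi : i < n + 1
  · lift i to Fin (n + 1) using hi
    rw [word_val]
    obtain rfl | ⟨i, rfl⟩ := Fin.eq_self_or_eq_succAbove v i
    · rw [insertMax_self, insertAt_self, Fin.val_last]
    · rw [insertMax_succAbove, val_succAbove, insertAt_skip, word_val, Fin.val_castSucc]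
  · grind [word, insertAt]

open Classical in
/-- The permutations of length `n` avoiding 1423, 2341 and 3142. -/
noncomputable def avoidingPerms (n : ℕ) : Finset (Equiv.Perm (Fin n)) :=
  {π | Avoids n (word π)}

open Classical in
lemma sum_avoidingPerms_succ (F : (ℕ → ℕ) → ℕ) :
    ∑ π ∈ avoidingPerms (n + 1), F (word π) = ∑ π ∈ avoidingPerms n,
      ∑ v ∈ Finset.range (n + 1) with Active n (word π) v, F (insertAt v n (word π)) := by
  simp only [avoidingPerms, Finset.sum_filter, Finset.sum_range]
  rw [← insertMax_bijective.sum_comp, Fintype.sum_prod_type]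
  refine Finset.sum_congr rfl fun π _ ↦ ?_
  simp only [word_insertMax, avoids_insertAt_iff (word_lt π) (Fin.is_le _), ite_and]
  split_ifs <;> simp

lemma card_avoidingPerms_add (n d : ℕ) :
    (avoidingPerms (n + d)).card = ∑ π ∈ avoidingPerms n, extensionCount d n (word π) := by
  induction d generalizing n with
  | zero => simp [extensionCount]
  | succ d ih =>
    rw [← Nat.add_assoc, Nat.add_right_comm, ih, sum_avoidingPerms_succ]
    simp only [extensionCount]

lemma isLayered_one (w : ℕ → ℕ) : IsLayered 1 w 0 0 where
  add_lt := by omega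
  head_anti := by omega
  tail_anti := by omega
  head_lt_tail := by omega
  mem_interior := by omega

lemma card_avoidingPerms_of_le_one (hn : n ≤ 1) : (avoidingPerms n).card = 1 := by
  have havoids (π : Equiv.Perm (Fin n)) : Avoids n (word π) := by constructor <;> omega
  have : Subsingleton (Fin n) := Fin.subsingleton_iff_le_one.mpr hn
  simp [avoidingPerms, havoids]

theorem card_avoidingPerms_succ (d : ℕ) :
    (avoidingPerms (d + 1)).card = labelCount d (.layered 0 0) := by
  rw [Nat.add_comm, card_avoidingPerms_add, Finset.sum_congr rfl fun π _ ↦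
    extensionCount_eq_labelCount d (l := .layered 0 0) (word_lt π) (isLayered_one _),
    Finset.sum_const, card_avoidingPerms_of_le_one le_rfl, one_smul]

lemma containsPattern_iff_strictMono {k : ℕ} {σ τ : Fin k → Fin k}
    (hστ : Function.LeftInverse σ τ) (hτσ : Function.LeftInverse τ σ) (π : Equiv.Perm (Fin n)) :
    ContainsPattern π σ ↔ ∃ f : Fin k ↪o Fin n, StrictMono fun a ↦ π (f (τ a)) := by
  refine exists_congr fun f ↦ ⟨fun h a b hab ↦ ?_, fun h a b ↦ ?_⟩
  · rwa [← h, hστ, hστ]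
  · rw [← h.lt_iff_lt, hτσ, hτσ]

lemma containsPattern_iff_word {σ τ : Fin 4 → Fin 4}
    (hστ : Function.LeftInverse σ τ) (hτσ : Function.LeftInverse τ σ) (π : Equiv.Perm (Fin n)) :
    ContainsPattern π σ ↔ ∃ i j k l, i < j ∧ j < k ∧ k < l ∧ l < n ∧
      word π (![i, j, k, l] (τ 0)) < word π (![i, j, k, l] (τ 1)) ∧
      word π (![i, j, k, l] (τ 1)) < word π (![i, j, k, l] (τ 2)) ∧
      word π (![i, j, k, l] (τ 2)) < word π (![i, j, k, l] (τ 3)) := by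
  rw [containsPattern_iff_strictMono hστ hτσ]
  constructor
  · rintro ⟨f, hf⟩
    have hval (a : Fin 4) : ![(f 0 : ℕ), f 1, f 2, f 3] a = f a := by fin_cases a <;> rfl
    refine ⟨f 0, f 1, f 2, f 3, by simp, by simp, by simp, (f 3).isLt, ?_⟩
    simp only [hval, word_val]
    exact ⟨hf (by decide), hf (by decide), hf (by decide)⟩
  · rintro ⟨i, j, k, l, hij, hjk, hkl, hl, hword⟩
    let f : Fin 4 → Fin n := ![⟨i, by omega⟩, ⟨j, by omega⟩, ⟨k, by omega⟩, ⟨l, hl⟩]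
    have hf : StrictMono f := by
      simp [f, Fin.strictMono_iff_lt_succ, Fin.forall_fin_succ, hij, hjk, hkl]
    have hval (a : Fin 4) : ![i, j, k, l] a = f a := by fin_cases a <;> rfl
    simp only [hval, word_val] at hword
    refine ⟨OrderEmbedding.ofStrictMono f hf, ?_⟩
    simpa [Fin.strictMono_iff_lt_succ, Fin.forall_fin_succ] using hword

lemma forall_not_containsPattern_iff_avoids (π : Equiv.Perm (Fin n)) :
    (∀ σ ∈ ({![0, 3, 1, 2], ![1, 2, 3, 0], ![2, 0, 3, 1]} : Set (Fin 4 → Fin 4)),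
      ¬ ContainsPattern π σ) ↔ Avoids n (word π) := by
  have h1423 := containsPattern_iff_word (σ := ![0, 3, 1, 2]) (τ := ![0, 2, 3, 1])
    (by decide) (by decide) π
  have h2341 := containsPattern_iff_word (σ := ![1, 2, 3, 0]) (τ := ![3, 0, 1, 2])
    (by decide) (by decide) π
  have h3142 := containsPattern_iff_word (σ := ![2, 0, 3, 1]) (τ := ![1, 3, 0, 2])
    (by decide) (by decide) π
  simp only [Set.mem_insert_iff, Set.mem_singleton_iff, forall_eq_or_imp, forall_eq,
    h1423, h2341, h3142, Matrix.cons_val, not_exists, not_and, not_lt]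
  exact ⟨fun ⟨h1, h2, h3⟩ ↦ ⟨h1, h2, h3⟩, fun h ↦ ⟨h.no_1423, h.no_2341, h.no_3142⟩⟩

lemma avoiderCount_eq_card_avoidingPerms (n : ℕ) :
    avoiderCount {![0, 3, 1, 2], ![1, 2, 3, 0], ![2, 0, 3, 1]} n = (avoidingPerms n).card := by
  classical
  simp only [avoiderCount, forall_not_containsPattern_iff_avoids, Nat.card_eq_fintype_card,
    Fintype.card_subtype, avoidingPerms]

end Permutations

section GeneratingFunctions

/-- The generating function of `labelCount` by depth. -/
noncomputable def labelGF (l : Label) : PowerSeries ℚ := .mk fun d ↦ (labelCount d l : ℚ)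

lemma avoiderGF_eq :
    avoiderGF {![0, 3, 1, 2], ![1, 2, 3, 0], ![2, 0, 3, 1]} =
      1 + X * labelGF (.layered 0 0) := by
  ext (_ | d)
  · simp [avoiderGF, avoiderCount_eq_card_avoidingPerms, card_avoidingPerms_of_le_one]
  · simp [avoiderGF, avoiderCount_eq_card_avoidingPerms, card_avoidingPerms_succ, labelGF,
      coeff_succ_X_mul, coeff_one]

lemma one_sub_X_mul_labelGF_blocked_succ (k : ℕ) :
    (1 - X) * labelGF (.blocked (k + 1)) = labelGF (.blocked k) := by
  rw [sub_mul, one_mul, sub_eq_iff_eq_add]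
  ext (_ | d)
  · simp [labelGF, labelCount]
  · simp only [labelGF, coeff_mk, labelCount, le_add_iff_nonneg_left, zero_le,
      Finset.sum_Icc_succ_top, Nat.cast_add, Nat.cast_sum, map_add, coeff_succ_X_mul]
    ring

lemma labelGF_layered_zero_zero : labelGF (.layered 0 0) = labelGF (.blocked 0) := by
  ext (_ | d) <;> simp [labelGF, labelCount]

lemma labelGF_layered_zero (s : ℕ) :
    labelGF (.layered s 0) = X * labelGF (.layered (s + 1) 0) + labelGF (.blocked s)
      - labelGF (.blocked 0) + 1 + X * labelGF (.layered s 1) := by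
  ext (_ | d)
  · simp [labelGF, labelCount]
  · have hempty : Finset.Icc 1 0 = ∅ := rfl
    simp only [labelGF, coeff_mk, labelCount, Nat.cast_add, Nat.cast_sum, map_add, map_sub,
      coeff_succ_X_mul, hempty, Finset.sum_empty, coeff_one, d.succ_ne_zero, if_false]
    ring

lemma labelGF_layered_succ (s t : ℕ) :
    labelGF (.layered s (t + 1)) = labelGF (.blocked s) + X * labelGF (.layered s (t + 2))
      + (t : PowerSeries ℚ) * (X * labelGF (.blocked 1)) := by
  rw [← map_natCast (C (R := ℚ)) t]
  ext (_ | d)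
  · simp [labelGF, labelCount, -map_natCast]
  · simp only [labelGF, coeff_mk, labelCount, Nat.cast_add, Nat.cast_sum, Nat.cast_mul, map_add,
      coeff_succ_X_mul, coeff_C_mul]
    ring

lemma forall_eq_of_sub_eq_X_mul_sub {R : Type*} [Ring R] {E F : ℕ → PowerSeries R}
    (h : ∀ t, E t - F t = X * (E (t + 1) - F (t + 1))) : ∀ t, E t = F t := by
  intro t
  rw [← sub_eq_zero]
  ext d
  induction d generalizing t with
  | zero => rw [h t, coeff_zero_X_mul, map_zero]
  | succ d ih => rw [h t, coeff_succ_X_mul, ih, map_zero, map_zero]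

lemma one_sub_X_sq_mul_labelGF_layered_succ (s t : ℕ) :
    (1 - X) ^ 2 * labelGF (.layered s (t + 1)) = (1 - X) * labelGF (.blocked s)
      + ((t : PowerSeries ℚ) * X * (1 - X) + X ^ 2) * labelGF (.blocked 1) := by
  revert t
  refine forall_eq_of_sub_eq_X_mul_sub fun t ↦ ?_
  push_cast
  linear_combination (1 - X) ^ 2 * labelGF_layered_succ s t

lemma mul_labelGF_layered_zero (s : ℕ) :
    (1 - 2 * X) * (1 - X) ^ 3 * labelGF (.layered s 0) =
      (1 - X) ^ 3 * labelGF (.blocked s) + (1 - 2 * X) *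
        ((1 - X) ^ 2 * (1 - labelGF (.blocked 0)) + X ^ 3 * labelGF (.blocked 1)) := by
  revert s
  refine forall_eq_of_sub_eq_X_mul_sub fun s ↦ ?_
  have htail := one_sub_X_sq_mul_labelGF_layered_succ s 0
  push_cast at htail
  linear_combination (1 - 2 * X) * (1 - X) ^ 3 * labelGF_layered_zero s
    + (1 - 2 * X) * (1 - X) * X * htail
    + (1 - X) ^ 2 * X * one_sub_X_mul_labelGF_blocked_succ s

end GeneratingFunctions

end GeneratingTree

theorem statement_10 :
    ((1 : PowerSeries ℚ) - 7*X + 17*X^2 - 20*X^3 + 12*X^4 - 2*X^5) * avoiderGF ({![0,3,1,2], ![1,2,3,0], ![2,0,3,1]} : Set (Fin 4 → Fin 4)) =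
      1 - 6*X + 12*X^2 - 11*X^3 + 5*X^4 := by
  have hroot := GeneratingTree.mul_labelGF_layered_zero 0
  have hblocked := GeneratingTree.one_sub_X_mul_labelGF_blocked_succ 0
  rw [GeneratingTree.labelGF_layered_zero_zero] at hroot
  rw [GeneratingTree.avoiderGF_eq, GeneratingTree.labelGF_layered_zero_zero]
  linear_combination X * (1 - X) * hroot + X * (1 - 2 * X) * X ^ 3 * hblocked
end
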